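/- arXiv:1910.02477 — 10 statements merged into one kernel-verified Lean document; each statement's English description precedes it below -/
import Mathlib

section
/- Let e > 0, m > e, u₀ > 0 and v₀ ≥ 0 be real numbers. Then for all real numbers A ≥ 0 and B ≥ 0 one has (e/(u₀²(m−e)²))·(u₀A + (u₀(m−e)+v₀)B)² + (2AB − eB²) ≥ 0. -/
/-- Numerical Bogomolov-constant for the polarisation `ω₀ = u₀(Θ+mf) + v₀f` on a
Weierstraß surface of Picard rank two: the constant `C_{ω₀} = e/(u₀²(m−e)²)`
satisfies `C_{ω₀}(D·ω₀)² + D·D ≥ 0` for every effective divisor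
`D = A f + B Θ` (`A, B ≥ 0`), where `D·ω₀ = u₀A + (u₀(m−e)+v₀)B` and
`D·D = 2AB − eB²`. -/
theorem bogomolov_constant_general_polarisation
    (e m u₀ v₀ : ℝ) (he : 0 < e) (hm : e < m) (hu₀ : 0 < u₀) (hv₀ : 0 ≤ v₀) :
    ∀ A B : ℝ, 0 ≤ A → 0 ≤ B →
      0 ≤ e / (u₀ ^ 2 * (m - e) ^ 2) * (u₀ * A + (u₀ * (m - e) + v₀) * B) ^ 2
          + (2 * A * B - e * B ^ 2) := by
  intro A B hA hB
  have hk : 0 < u₀ * (m - e) := mul_pos hu₀ (sub_pos.mpr hm)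
  have h1 : u₀ * (m - e) * B ≤ u₀ * A + (u₀ * (m - e) + v₀) * B := by
    have h2 := mul_nonneg hu₀.le hA
    have h3 := mul_nonneg hv₀ hB
    linarith
  have h4 : (u₀ * (m - e) * B) ^ 2 ≤ (u₀ * A + (u₀ * (m - e) + v₀) * B) ^ 2 :=
    pow_le_pow_left₀ (mul_nonneg hk.le hB) h1 2
  have h5 : 0 ≤ e / (u₀ ^ 2 * (m - e) ^ 2) := by positivity
  have h6 := mul_le_mul_of_nonneg_left h4 h5
  have h7 : e / (u₀ ^ 2 * (m - e) ^ 2) * (u₀ * (m - e) * B) ^ 2 = e * B ^ 2 := by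
    have h8 : m - e ≠ 0 := (sub_pos.mpr hm).ne'
    field_simp
  have h9 := mul_nonneg hA hB
  linarith
end

section
/- Let N be a real vector space with a symmetric bilinear form written D·D', and Θ, f ∈ N with Θ·Θ = −e, f·f = 0, Θ·f = 1 (e, m real). Let ch(E) = (n, C, s) ∈ ℝ × N × ℝ, d := C·f, c := C·Θ, and define the transformed character ch(ΦE) := (d, D_Φ, −c − de + (1/2)ne) with D_Φ := −C + d·e·f + (d−n)Θ + (c − (1/2)ed + s)f. For u, v > 0 set ω := u(Θ + mf) + vf and Z_ω(ch) := −ch₂ + (ω·ω/2)·ch₀ + i·(ω·ch₁). Then Z_ω(ΦE[1]) := −Z_ω(ch(ΦE)) = (−c + (e/2)n) − ((m − e/2)u² + uv + e)·d + i·( u(−(s − (e/2)d) + (m−e)n) + v n ). Moreover, if α, β > 0 and (m − e/2)u² + uv = α + m − e, then setting ω̄ := (β/α)(Θ + mf) + βf and ch₁^B(E) := C − (e/2)n·f (the B-field twist with B = (e/2)f), one has ω̄·ch₁^B(E) = −(β/α)·Re Z_ω(ΦE[1]). -/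
/-- The central charge of the shifted Fourier–Mukai transform on a Weierstraß
elliptic surface: with `ch(E) = (n, C, s)`, `d = C·f`, `c = C·Θ`,
`ch(ΦE) = (d, D_Φ, −c − de + ne/2)`, `ω = u(Θ+mf) + vf` and
`Z_ω = −ch₂ + (ω²/2)ch₀ + i ω·ch₁`, one has
`Z_ω(ΦE[1]) = −Z_ω(ch(ΦE)) = (−c + (e/2)n) − ((m−e/2)u² + uv + e)d
+ i(u(−(s − (e/2)d) + (m−e)n) + vn)`; moreover on the volume section
`(m−e/2)u² + uv = α + m − e` (with `α, β > 0`), for `ω̄ = (β/α)(Θ+mf) + βf`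
and the B-field twist `ch₁^B(E) = C − (e/2)n·f` one has
`ω̄·ch₁^B(E) = −(β/α)·Re Z_ω(ΦE[1])`. -/
theorem fourier_mukai_central_charge
    {N : Type*} [AddCommGroup N] [Module ℝ N]
    (B : N →ₗ[ℝ] N →ₗ[ℝ] ℝ) (hsymm : ∀ D D' : N, B D D' = B D' D)
    (e m : ℝ) (Θ f : N)
    (hΘΘ : B Θ Θ = -e) (hff : B f f = 0) (hΘf : B Θ f = 1)
    (n s : ℝ) (C : N) (d c : ℝ) (hd : d = B C f) (hc : c = B C Θ)
    (u v : ℝ) (hu : 0 < u) (hv : 0 < v)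
    (ω : N) (hω : ω = u • (Θ + m • f) + v • f)
    (DΦ : N)
    (hDΦ : DΦ = -C + (d * e) • f + (d - n) • Θ + (c - (1 / 2) * e * d + s) • f)
    (Z : ℂ)
    (hZ : Z = -((((-(-c - d * e + (1 / 2) * n * e) + B ω ω / 2 * d : ℝ) : ℂ))
        + ((B ω DΦ : ℝ) : ℂ) * Complex.I)) :
    Z = (((-c + e / 2 * n) - ((m - e / 2) * u ^ 2 + u * v + e) * d : ℝ) : ℂ)
        + (((u * (-(s - e / 2 * d) + (m - e) * n) + v * n : ℝ)) : ℂ) * Complex.I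
    ∧ ∀ α β : ℝ, 0 < α → 0 < β →
        (m - e / 2) * u ^ 2 + u * v = α + m - e →
        B ((β / α) • (Θ + m • f) + β • f) (C - (e / 2 * n) • f)
          = -(β / α) * Z.re := by
  have hfΘ : B f Θ = 1 := by rw [hsymm, hΘf]
  have hfC : B f C = d := by rw [hsymm, hd]
  have hΘC : B Θ C = c := by rw [hsymm, hc]
  have hωω : B ω ω = 2 * ((m - e / 2) * u ^ 2 + u * v) := by
    rw [hω]
    simp only [map_add, map_smul, LinearMap.add_apply, LinearMap.smul_apply, smul_eq_mul,
      hΘΘ, hff, hΘf, hfΘ]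
    ring
  have hωD : B ω DΦ = -(u * (-(s - e / 2 * d) + (m - e) * n) + v * n) := by
    rw [hω, hDΦ]
    simp only [map_add, map_neg, map_smul, LinearMap.add_apply, LinearMap.smul_apply,
      smul_eq_mul, hΘΘ, hff, hΘf, hfΘ, hfC, hΘC]
    ring
  have hmain : Z = (((-c + e / 2 * n) - ((m - e / 2) * u ^ 2 + u * v + e) * d : ℝ) : ℂ)
        + (((u * (-(s - e / 2 * d) + (m - e) * n) + v * n : ℝ)) : ℂ) * Complex.I := by
    rw [hZ, hωω, hωD]
    push_cast
    ring
  refine ⟨hmain, ?_⟩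
  intro α β hα hβ hvol
  have hre : Z.re = (-c + e / 2 * n) - ((m - e / 2) * u ^ 2 + u * v + e) * d := by
    rw [hmain, Complex.add_re, Complex.ofReal_re, Complex.re_ofReal_mul, Complex.I_re]
    ring
  rw [hre, hvol]
  simp only [map_add, map_sub, map_smul, LinearMap.add_apply, LinearMap.smul_apply,
    smul_eq_mul, hff, hΘf, hfC, hΘC]
  field_simp
  ring
end

section
/- In the frame setting below, assume x ≠ 0 and xc₁ − ry₁ ≠ 0. Write the shifted characters as e^L ch = (x, (y₁+xl₁)H + (y₂+xl₂)H^⊥ + (Δ+xΔ_L), z + L·ch₁ + (x/2)L·L) and e^L ch' = (r, (c₁+rl₁)H + (c₂+rl₂)H^⊥ + (Δ'+rΔ_L), χ + L·ch₁' + (r/2)L·L); note x(c₁+rl₁) − r(y₁+xl₁) = xc₁ − ry₁. Then: (i) C(e^L ch, e^L ch') = C(ch, ch') + l₁ − l₂·(δ/g)·(xc₂ − ry₂)/(xc₁ − ry₁) + (x·Δ'·Δ_L − r·Δ·Δ_L)/(g(xc₁ − ry₁)); and (ii) F(e^L ch) = F(ch) + (δ/g)l₂² − (2δ/g)(w − y₂/x)l₂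 − (Δ_L·Δ_L)/g − 2(Δ·Δ_L)/(xg). -/
/-- Wall slope `C(ch, ch')` in a fixed frame `(H, H^⊥, w)` with `g = H·H`,
`δ = −H^⊥·H^⊥`, applied to decomposition coefficients. -/
noncomputable def Cslope (g δ w x y₁ y₂ z r c₁ c₂ χ : ℝ) : ℝ :=
  (x * χ - r * z + w * δ * (x * c₂ - r * y₂)) / (g * (x * c₁ - r * y₁))

/-- The quantity `F(ch)` from Bertram's nested wall lemma. -/
noncomputable def Fval (g δ w x y₁ y₂ z : ℝ) : ℝ :=
  δ / g * (w - y₂ / x) ^ 2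
    + 1 / (x ^ 2 * g) * (y₁ ^ 2 * g - y₂ ^ 2 * δ - 2 * x * z)

/-- Shift-by-line-bundle formulas for `x ≠ 0`: writing
`e^L ch = (x, (y₁+xl₁)H + (y₂+xl₂)H^⊥ + (Δ+xΔ_L), z + L·ch₁ + (x/2)L·L)` and
similarly for `e^L ch'` (note `x(c₁+rl₁) − r(y₁+xl₁) = xc₁ − ry₁`), one has
the stated formulas for `C(e^Lch, e^Lch')` and `F(e^Lch)`. -/
theorem shift_by_line_bundle_rank_nonzero
    {N : Type*} [AddCommGroup N] [Module ℝ N]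
    (B : N →ₗ[ℝ] N →ₗ[ℝ] ℝ) (hsymm : ∀ D D' : N, B D D' = B D' D)
    (H Hp : N) (hHHp : B H Hp = 0)
    (g δ w : ℝ) (hg : g = B H H) (hgpos : 0 < g) (hδ : δ = -(B Hp Hp))
    (x y₁ y₂ z r c₁ c₂ χ l₁ l₂ : ℝ) (Δ Δ' ΔL : N)
    (hΔ1 : B Δ H = 0) (hΔ2 : B Δ Hp = 0)
    (hΔ'1 : B Δ' H = 0) (hΔ'2 : B Δ' Hp = 0)
    (hΔL1 : B ΔL H = 0) (hΔL2 : B ΔL Hp = 0)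
    (ch1 ch1' L : N)
    (hch1 : ch1 = y₁ • H + y₂ • Hp + Δ)
    (hch1' : ch1' = c₁ • H + c₂ • Hp + Δ')
    (hL : L = l₁ • H + l₂ • Hp + ΔL)
    (hx : x ≠ 0) (hwall : x * c₁ - r * y₁ ≠ 0) :
    x * (c₁ + r * l₁) - r * (y₁ + x * l₁) = x * c₁ - r * y₁ ∧
    Cslope g δ w x (y₁ + x * l₁) (y₂ + x * l₂) (z + B L ch1 + x / 2 * B L L)
        r (c₁ + r * l₁) (c₂ + r * l₂) (χ + B L ch1' + r / 2 * B L L)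
      = Cslope g δ w x y₁ y₂ z r c₁ c₂ χ + l₁
          - l₂ * (δ / g) * (x * c₂ - r * y₂) / (x * c₁ - r * y₁)
          + (x * B Δ' ΔL - r * B Δ ΔL) / (g * (x * c₁ - r * y₁)) ∧
    Fval g δ w x (y₁ + x * l₁) (y₂ + x * l₂) (z + B L ch1 + x / 2 * B L L)
      = Fval g δ w x y₁ y₂ z + δ / g * l₂ ^ 2 - 2 * δ / g * (w - y₂ / x) * l₂
          - B ΔL ΔL / g - 2 * B Δ ΔL / (x * g) := by
  have hg0 : g ≠ 0 := hgpos.ne'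
  have e1 : B Hp Hp = -δ := by rw [hδ]; ring
  have e2 : B H H = g := hg.symm
  have e3 : B Hp H = 0 := by rw [hsymm]; exact hHHp
  have a1 : B H Δ = 0 := by rw [hsymm]; exact hΔ1
  have a2 : B Hp Δ = 0 := by rw [hsymm]; exact hΔ2
  have a3 : B H Δ' = 0 := by rw [hsymm]; exact hΔ'1
  have a4 : B Hp Δ' = 0 := by rw [hsymm]; exact hΔ'2
  have a5 : B H ΔL = 0 := by rw [hsymm]; exact hΔL1
  have a6 : B Hp ΔL = 0 := by rw [hsymm]; exact hΔL2
  have k1 : B L ch1 = l₁ * y₁ * g - l₂ * y₂ * δ + B Δ ΔL := by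
    rw [hL, hch1, hsymm Δ ΔL]
    simp only [map_add, map_smul, LinearMap.add_apply, LinearMap.smul_apply, smul_eq_mul,
      e1, e2, e3, hHHp, a1, a2, hΔL1, hΔL2]
    ring
  have k2 : B L ch1' = l₁ * c₁ * g - l₂ * c₂ * δ + B Δ' ΔL := by
    rw [hL, hch1', hsymm Δ' ΔL]
    simp only [map_add, map_smul, LinearMap.add_apply, LinearMap.smul_apply, smul_eq_mul,
      e1, e2, e3, hHHp, a3, a4, hΔL1, hΔL2]
    ring
  have k3 : B L L = l₁ ^ 2 * g - l₂ ^ 2 * δ + B ΔL ΔL := by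
    rw [hL]
    simp only [map_add, map_smul, LinearMap.add_apply, LinearMap.smul_apply, smul_eq_mul,
      e1, e2, e3, hHHp, a5, a6, hΔL1, hΔL2]
    ring
  have hw : x * (c₁ + r * l₁) - r * (y₁ + x * l₁) = x * c₁ - r * y₁ := by ring
  refine ⟨hw, ?_, ?_⟩
  · unfold Cslope
    rw [hw, k1, k2, k3]
    generalize B Δ ΔL = p
    generalize B Δ' ΔL = q
    generalize B ΔL ΔL = t
    clear * - hg0 hwall
    field_simp
    ring
  · unfold Fval
    rw [k1, k3]
    generalize B Δ ΔL = p
    generalize B ΔL ΔL = t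
    clear * - hg0 hx
    field_simp
    ring
end

section
/- In the frame setting below, assume additionally the Hodge-index property: every D ∈ N with D·H = 0 satisfies D·D ≤ 0. (i) If ch = (x, ch₁, z) with x ≠ 0 is of Bogomolov type, i.e. ch₁·ch₁ − 2xz ≥ 0, then F(ch) ≥ 0 and F(e^L ch) ≥ 0 for every L ∈ N; in particular the point P(ch) = (y₁/x, ((y₁/x)² − F(ch))/2) lies on or below the parabola q = s²/2. (ii) If ch' = (r, ch₁', χ) with r ≠ 0 is of Bogomolov type, i.e. ch₁'·ch₁' − 2rχ ≥ 0, then F'(ch') ≥ 0 and F'(e^L ch') ≥ 0 for every L ∈ N; in particular P'(ch') = (c₁/r, ((c₁/r)² − F'(ch'))/2) lies on or below the parabola q = s²/2. -/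
/-- The quantity `F'(ch')` from Bertram's nested wall lemma. -/
noncomputable def F'val (g δ w r c₁ c₂ χ : ℝ) : ℝ :=
  δ / g * (w - c₂ / r) ^ 2
    + 1 / (r ^ 2 * g) * (c₁ ^ 2 * g - c₂ ^ 2 * δ - 2 * r * χ)

theorem aux_nonneg {N : Type*} [AddCommGroup N] [Module ℝ N]
    (B : N →ₗ[ℝ] N →ₗ[ℝ] ℝ) (hsymm : ∀ D D' : N, B D D' = B D' D)
    (H Hp : N) (hHHp : B H Hp = 0)
    (g δ w : ℝ) (hg : g = B H H) (hgpos : 0 < g) (hδ : δ = -(B Hp Hp))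
    (hHodge : ∀ D : N, B D H = 0 → B D D ≤ 0)
    (x y₁ y₂ z : ℝ) (Δ : N) (h1 : B Δ H = 0) (h2 : B Δ Hp = 0)
    (hb : 0 ≤ B (y₁ • H + y₂ • Hp + Δ) (y₁ • H + y₂ • Hp + Δ) - 2 * x * z) :
    0 ≤ Fval g δ w x y₁ y₂ z := by
  have h0 : B Hp H = 0 := by rw [hsymm, hHHp]
  have hd : 0 ≤ δ := by have := hHodge Hp h0; linarith
  have hD := hHodge Δ h1
  have h1' : B H Δ = 0 := by rw [hsymm, h1]
  have h2' : B Hp Δ = 0 := by rw [hsymm, h2]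
  have hpp : B Hp Hp = -δ := by linarith
  simp only [map_add, map_smul, LinearMap.add_apply, LinearMap.smul_apply, smul_eq_mul,
    h0, h1, h2, h1', h2', hHHp, hpp, ← hg] at hb
  unfold Fval
  have hk : 0 ≤ y₁ ^ 2 * g - y₂ ^ 2 * δ - 2 * x * z := by nlinarith
  positivity

theorem aux_shift {N : Type*} [AddCommGroup N] [Module ℝ N]
    (B : N →ₗ[ℝ] N →ₗ[ℝ] ℝ) (hsymm : ∀ D D' : N, B D D' = B D' D)
    (H Hp : N) (hHHp : B H Hp = 0)
    (g δ w : ℝ) (hg : g = B H H) (hgpos : 0 < g) (hδ : δ = -(B Hp Hp))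
    (hHodge : ∀ D : N, B D H = 0 → B D D ≤ 0)
    (x y₁ y₂ z : ℝ) (Δ : N) (h1 : B Δ H = 0) (h2 : B Δ Hp = 0)
    (hb : 0 ≤ B (y₁ • H + y₂ • Hp + Δ) (y₁ • H + y₂ • Hp + Δ) - 2 * x * z)
    (l₁ l₂ : ℝ) (ΔL : N) (h3 : B ΔL H = 0) (h4 : B ΔL Hp = 0) :
    0 ≤ Fval g δ w x (y₁ + x * l₁) (y₂ + x * l₂)
          (z + B (l₁ • H + l₂ • Hp + ΔL) (y₁ • H + y₂ • Hp + Δ)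
            + x / 2 * B (l₁ • H + l₂ • Hp + ΔL) (l₁ • H + l₂ • Hp + ΔL)) := by
  apply aux_nonneg B hsymm H Hp hHHp g δ w hg hgpos hδ hHodge _ _ _ _ (Δ + x • ΔL)
  · simp [h1, h3]
  · simp [h2, h4]
  · have e : (y₁ + x * l₁) • H + (y₂ + x * l₂) • Hp + (Δ + x • ΔL)
        = (y₁ • H + y₂ • Hp + Δ) + x • (l₁ • H + l₂ • Hp + ΔL) := by module
    rw [e]
    generalize y₁ • H + y₂ • Hp + Δ = D at *
    generalize l₁ • H + l₂ • Hp + ΔL = L at *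
    have hs := hsymm D L
    simp only [map_add, map_smul, LinearMap.add_apply, LinearMap.smul_apply, smul_eq_mul, hs]
    linarith

/-- Under the Hodge-index property (`D·H = 0 → D·D ≤ 0`): (i) if
`ch = (x, y₁H + y₂H^⊥ + Δ, z)` with `x ≠ 0` is of Bogomolov type then
`F(ch) ≥ 0` and `F(e^L ch) ≥ 0` for every `L = l₁H + l₂H^⊥ + Δ_L`, so the
point `P(ch)` lies on or below the parabola `q = s²/2`; (ii) similarly for
rank `r ≠ 0` characters `ch'` and `F'`. -/
theorem bogomolov_type_F_nonneg
    {N : Type*} [AddCommGroup N] [Module ℝ N]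
    (B : N →ₗ[ℝ] N →ₗ[ℝ] ℝ) (hsymm : ∀ D D' : N, B D D' = B D' D)
    (H Hp : N) (hHHp : B H Hp = 0)
    (g δ w : ℝ) (hg : g = B H H) (hgpos : 0 < g) (hδ : δ = -(B Hp Hp))
    (hHodge : ∀ D : N, B D H = 0 → B D D ≤ 0) :
    (∀ (x y₁ y₂ z : ℝ) (Δ : N), B Δ H = 0 → B Δ Hp = 0 → x ≠ 0 →
      0 ≤ B (y₁ • H + y₂ • Hp + Δ) (y₁ • H + y₂ • Hp + Δ) - 2 * x * z →
      0 ≤ Fval g δ w x y₁ y₂ z ∧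
      (∀ (l₁ l₂ : ℝ) (ΔL : N), B ΔL H = 0 → B ΔL Hp = 0 →
        0 ≤ Fval g δ w x (y₁ + x * l₁) (y₂ + x * l₂)
          (z + B (l₁ • H + l₂ • Hp + ΔL) (y₁ • H + y₂ • Hp + Δ)
            + x / 2 * B (l₁ • H + l₂ • Hp + ΔL) (l₁ • H + l₂ • Hp + ΔL))) ∧
      ((y₁ / x) ^ 2 - Fval g δ w x y₁ y₂ z) / 2 ≤ (y₁ / x) ^ 2 / 2) ∧
    (∀ (r c₁ c₂ χ : ℝ) (Δ' : N), B Δ' H = 0 → B Δ' Hp = 0 → r ≠ 0 →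
      0 ≤ B (c₁ • H + c₂ • Hp + Δ') (c₁ • H + c₂ • Hp + Δ') - 2 * r * χ →
      0 ≤ F'val g δ w r c₁ c₂ χ ∧
      (∀ (l₁ l₂ : ℝ) (ΔL : N), B ΔL H = 0 → B ΔL Hp = 0 →
        0 ≤ F'val g δ w r (c₁ + r * l₁) (c₂ + r * l₂)
          (χ + B (l₁ • H + l₂ • Hp + ΔL) (c₁ • H + c₂ • Hp + Δ')
            + r / 2 * B (l₁ • H + l₂ • Hp + ΔL) (l₁ • H + l₂ • Hp + ΔL))) ∧
      ((c₁ / r) ^ 2 - F'val g δ w r c₁ c₂ χ) / 2 ≤ (c₁ / r) ^ 2 / 2) := by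
  have key : ∀ (x y₁ y₂ z : ℝ) (Δ : N), B Δ H = 0 → B Δ Hp = 0 → x ≠ 0 →
      0 ≤ B (y₁ • H + y₂ • Hp + Δ) (y₁ • H + y₂ • Hp + Δ) - 2 * x * z →
      0 ≤ Fval g δ w x y₁ y₂ z ∧
      (∀ (l₁ l₂ : ℝ) (ΔL : N), B ΔL H = 0 → B ΔL Hp = 0 →
        0 ≤ Fval g δ w x (y₁ + x * l₁) (y₂ + x * l₂)
          (z + B (l₁ • H + l₂ • Hp + ΔL) (y₁ • H + y₂ • Hp + Δ)
            + x / 2 * B (l₁ • H + l₂ • Hp + ΔL) (l₁ • H + l₂ • Hp + ΔL))) ∧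
      ((y₁ / x) ^ 2 - Fval g δ w x y₁ y₂ z) / 2 ≤ (y₁ / x) ^ 2 / 2 := by
    intro x y₁ y₂ z Δ h1 h2 _ hb
    have hF := aux_nonneg B hsymm H Hp hHHp g δ w hg hgpos hδ hHodge x y₁ y₂ z Δ h1 h2 hb
    refine ⟨hF, ?_, by linarith⟩
    intro l₁ l₂ ΔL h3 h4
    exact aux_shift B hsymm H Hp hHHp g δ w hg hgpos hδ hHodge x y₁ y₂ z Δ h1 h2 hb l₁ l₂ ΔL h3 h4
  exact ⟨key, key⟩
end

section
/- (Potential walls for two-dimensional objects, case B.) Assume k + Σ_i ξ_i = 0 and ρ := p − ek + Σ_i ξ_i θ_i ≠ 0. Define A := −( (xχ − rz)/x + Δ'·Δ_L + (a_L + Σ_i η_i)(p − (e/2)k + Σ_i ξ_i(θ_i + e/2)) )·(a_L + Σ_i η_i)/ρ and B := z/x + (Δ_L·Δ_L)/2 − ( b_L − e·a_L + (e/2)(a_L + Σ_i η_i) + Σ_i η_i θ_i )·( (xχ − rz)/x + Δ'·Δ_L )/ρ. Then there exists λ₀ ∈ (0,1) such that for each λ ∈ (0,λ₀) there is a unique real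 number Q(λ) with (λ, Q(λ)) on the potential wall W(e^L ch, e^L ch'); moreover 2λ²·Q(λ) → A as λ → 0⁺; if A = 0 then 2λ·Q(λ) → B as λ → 0⁺; and if A = B = 0 then Q(λ) remains bounded as λ → 0⁺. -/
open Set Filter

set_option maxHeartbeats 2000000 in
/-- Potential walls in the `(λ,0,0,q)`-plane for two-dimensional objects,
case (B): `ch = (x, 0, z)` with `x ≠ 0`, `xz ≤ 0`,
`ch' = (r, kΘ + pf + Σᵢ ξᵢΘᵢ, χ)` with `k + Σᵢ ξᵢ = 0` and
`ρ = p − ek + Σᵢ ξᵢθᵢ ≠ 0`. For small `λ > 0` the potential wall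
`W(e^L ch, e^L ch')` meets each vertical line `λ = const` in a unique point
`(λ, Q(λ))`, and `2λ²Q(λ) → A`; if `A = 0` then `2λQ(λ) → B`; if `A = B = 0`
then `Q(λ)` stays bounded as `λ → 0⁺`. -/
theorem potential_wall_asymptotics_dim_two_caseB
    {ι : Type*} [Fintype ι] {N : Type*} [AddCommGroup N] [Module ℝ N]
    (B : N →ₗ[ℝ] N →ₗ[ℝ] ℝ) (hsymm : ∀ D D' : N, B D D' = B D' D)
    (e m : ℝ) (Θ f : N) (Θi : ι → N)
    (hΘΘ : B Θ Θ = -e) (hΘiΘi : ∀ i, B (Θi i) (Θi i) = -e)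
    (hff : B f f = 0) (hΘf : B Θ f = 1) (hΘif : ∀ i, B (Θi i) f = 1)
    (θ : ι → ℝ) (hθ : ∀ i, θ i = B Θ (Θi i))
    (Hl : ℝ → N) (hHl : ∀ l : ℝ, Hl l = l • (Θ + m • f) + (1 - l) • f)
    (g : ℝ → ℝ) (hg : ∀ l : ℝ, g l = B (Hl l) (Hl l))
    (x z r k p χ aL bL : ℝ) (ξ η : ι → ℝ)
    (hx : x ≠ 0) (hBog : x * z ≤ 0)
    (hk : k + ∑ i, ξ i = 0)
    (ρ : ℝ) (hρ : ρ = p - e * k + ∑ i, ξ i * θ i) (hρne : ρ ≠ 0)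
    (Δi : ι → N) (hΔi : ∀ i, Δi i = Θi i - Θ - (θ i + e) • f)
    (ΔL Δ' : N) (hΔL : ΔL = ∑ i, η i • Δi i) (hΔ' : Δ' = ∑ i, ξ i • Δi i)
    (L ch'1 : N)
    (hL : L = aL • Θ + bL • f + ∑ i, η i • Θi i)
    (hch'1 : ch'1 = k • Θ + p • f + ∑ i, ξ i • Θi i)
    (A Bc : ℝ)
    (hA : A = -((x * χ - r * z) / x + B Δ' ΔL
        + (aL + ∑ i, η i) * (p - e / 2 * k + ∑ i, ξ i * (θ i + e / 2)))
        * (aL + ∑ i, η i) / ρ)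
    (hBc : Bc = z / x + B ΔL ΔL / 2
        - (bL - e * aL + e / 2 * (aL + ∑ i, η i) + ∑ i, η i * θ i)
          * ((x * χ - r * z) / x + B Δ' ΔL) / ρ)
    (onWall : ℝ → ℝ → Prop)
    (honWall : ∀ l q : ℝ, onWall l q ↔
      (-(z + B L (0 : N) + x / 2 * B L L) + x * g l * q)
          * B (ch'1 + r • L) (Hl l)
        = (-(χ + B L ch'1 + r / 2 * B L L) + r * g l * q)
          * B ((0 : N) + x • L) (Hl l)) :
    ∃ l₀ ∈ Ioo (0 : ℝ) 1, ∃ Q : ℝ → ℝ,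
      (∀ l ∈ Ioo (0 : ℝ) l₀, onWall l (Q l) ∧ ∀ q : ℝ, onWall l q → q = Q l) ∧
      Tendsto (fun l => 2 * l ^ 2 * Q l) (nhdsWithin 0 (Ioo (0 : ℝ) l₀))
        (nhds A) ∧
      (A = 0 →
        Tendsto (fun l => 2 * l * Q l) (nhdsWithin 0 (Ioo (0 : ℝ) l₀))
          (nhds Bc)) ∧
      (A = 0 → Bc = 0 → ∃ M : ℝ, ∀ l ∈ Ioo (0 : ℝ) l₀, |Q l| ≤ M) := by
  have hfΘ : B f Θ = 1 := by rw [hsymm, hΘf]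
  have hfi : ∀ i, B f (Θi i) = 1 := fun i => by rw [hsymm, hΘif]
  have hiΘ : ∀ i, B (Θi i) Θ = θ i := fun i => by rw [hsymm, hθ]
  have hdf : ∀ i, B (Δi i) f = 0 := fun i => by
    rw [hΔi]; simp [hΘif, hΘf, hff]
  have hdΘ : ∀ i, B (Δi i) Θ = 0 := fun i => by
    rw [hΔi]; simp [hiΘ, hΘΘ, hfΘ]
  have hLf : B ΔL f = 0 := by rw [hΔL]; simp [hdf]
  have hLΘ : B ΔL Θ = 0 := by rw [hΔL]; simp [hdΘ]
  have hcf : B Δ' f = 0 := by rw [hΔ']; simp [hdf]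
  have hcΘ : B Δ' Θ = 0 := by rw [hΔ']; simp [hdΘ]
  have hfL : B f ΔL = 0 := by rw [hsymm, hLf]
  have hΘL : B Θ ΔL = 0 := by rw [hsymm, hLΘ]
  have hsum : ∀ u : ι → ℝ, ∑ i, u i • Θi i
      = ∑ i, u i • Δi i + (∑ i, u i) • Θ + (∑ i, u i * θ i + e * ∑ i, u i) • f := by
    intro u
    rw [Finset.mul_sum, ← Finset.sum_add_distrib, Finset.sum_smul, Finset.sum_smul,
      ← Finset.sum_add_distrib, ← Finset.sum_add_distrib]
    refine Finset.sum_congr rfl fun i _ => ?_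
    rw [hΔi]; module
  obtain ⟨S, hS⟩ : ∃ S, S = aL + ∑ i, η i := ⟨_, rfl⟩
  obtain ⟨T, hT⟩ : ∃ T, T = bL - e * aL + ∑ i, η i * θ i := ⟨_, rfl⟩
  have hL2 : L = ΔL + S • Θ + (T + e * S) • f := by
    rw [hL, hsum, ← hΔL, hS, hT]; module
  have hc2 : ch'1 = Δ' + ρ • f := by
    have hk' : k = - ∑ i, ξ i := by linarith
    rw [hch'1, hsum, ← hΔ', hρ, hk']; module
  have hLL : B L L = B ΔL ΔL + e * S ^ 2 + 2 * S * T := by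
    rw [hL2]; simp [hLf, hLΘ, hfL, hΘL, hΘΘ, hff, hΘf, hfΘ]; ring
  have hLc : B L ch'1 = B Δ' ΔL + ρ * S := by
    rw [hsymm, hL2, hc2]; simp [hcf, hcΘ, hfL, hff, hfΘ]
  have hcH : ∀ l, B ch'1 (Hl l) = l * ρ := fun l => by
    rw [hc2, hHl]; simp [hcf, hcΘ, hff, hfΘ]; ring
  have hLH : ∀ l, B L (Hl l) = S + l * (T + (m - 1) * S) := fun l => by
    rw [hL2, hHl]; simp [hLf, hLΘ, hΘΘ, hff, hfΘ, hΘf]; ring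
  obtain ⟨κ, hκ⟩ : ∃ κ, κ = m - e / 2 - 1 := ⟨_, rfl⟩
  have hg2 : ∀ l, g l = 2 * l * (1 + κ * l) := fun l => by
    rw [hg, hHl, hκ]; simp [hΘΘ, hff, hfΘ, hΘf]; ring
  obtain ⟨D, hD⟩ : ∃ D, D = (x * χ - r * z) / x + B Δ' ΔL := ⟨_, rfl⟩
  have hDx : r * z = x * χ - x * (D - B Δ' ΔL) := by rw [hD]; field_simp; ring
  have hA2 : A = -(D + S * ρ) * S / ρ := by
    have hxi : ∑ i, ξ i * (θ i + e / 2) = ∑ i, ξ i * θ i + e / 2 * ∑ i, ξ i := by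
      rw [Finset.mul_sum, ← Finset.sum_add_distrib]
      exact Finset.sum_congr rfl fun i _ => by ring
    have : p - e / 2 * k + ∑ i, ξ i * (θ i + e / 2) = ρ := by
      rw [hxi, hρ]; linear_combination (e / 2) * hk
    rw [hA, this, ← hS, ← hD]
  have hB2 : Bc = z / x + B ΔL ΔL / 2 - (T + e / 2 * S) * D / ρ := by
    rw [hBc, ← hD, ← hS, hT]; ring
  obtain ⟨V, hV⟩ : ∃ V, V = z / x + B L L / 2 - (D + S * ρ) * (T + (m - 1) * S) / ρ := ⟨_, rfl⟩
  have hAV : A = 0 → V = Bc := by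
    intro h0
    have h1 : (D + S * ρ) * S = 0 := by
      rw [hA2] at h0; field_simp at h0
      linarith
    have hVB : V - Bc = -((D + S * ρ) * S) * ((m - 1) - e / 2) / ρ := by
      rw [hV, hB2, hLL]; field_simp; ring
    rw [h1] at hVB; simp at hVB; linarith
  have hl₀ : 0 < 1 / (2 * (1 + |κ|)) := by positivity
  obtain ⟨l₀, hl₀e⟩ : ∃ l₀, l₀ = 1 / (2 * (1 + |κ|)) := ⟨_, rfl⟩
  have hl₀m : l₀ * (2 * (1 + |κ|)) = 1 := by rw [hl₀e]; field_simp
  rw [← hl₀e] at hl₀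
  have hl₀1 : l₀ < 1 := by nlinarith [abs_nonneg κ]
  have hpos : ∀ l ∈ Ioo (0 : ℝ) l₀, 0 < 1 + κ * l := by
    intro l hl
    have h1 := mul_le_mul_of_nonneg_left hl.2.le (abs_nonneg κ)
    have h2 := mul_le_mul_of_nonneg_right (neg_abs_le κ) hl.1.le
    linarith
  have hlim : ∀ a b : ℝ, Tendsto (fun l : ℝ => (a + b * l) / (1 + κ * l))
      (nhdsWithin 0 (Ioo (0 : ℝ) l₀)) (nhds a) := by
    intro a b
    have hc : ContinuousAt (fun l : ℝ => (a + b * l) / (1 + κ * l)) 0 := by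
      apply ContinuousAt.div <;> first | fun_prop | simp
    have := hc.tendsto
    simp only [mul_zero, add_zero, div_one] at this
    exact this.mono_left nhdsWithin_le_nhds
  refine ⟨l₀, ⟨hl₀, hl₀1⟩, fun l => (A / l + V) / g l, ?_, ?_, ?_, ?_⟩
  · intro l hl
    have hl0 : l ≠ 0 := hl.1.ne'
    have hp := (hpos l hl).ne'
    have hgl : g l ≠ 0 := by rw [hg2]; simp [hl0, hp]
    have key : ∀ q, onWall l q ↔ g l * q = A / l + V := by
      intro q
      rw [honWall]
      have e1 : B (ch'1 + r • L) (Hl l) = l * ρ + r * (S + l * (T + (m - 1) * S)) := by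
        simp [hcH, hLH]
      have e2 : B ((0 : N) + x • L) (Hl l) = x * (S + l * (T + (m - 1) * S)) := by
        simp [hLH]
      rw [e1, e2, hLc, map_zero, ← sub_eq_zero, ← sub_eq_zero (a := g l * q)]
      have e3 : g l * q - (A / l + V) = (1 / (x * l * ρ)) *
         ((-(z + 0 + x / 2 * B L L) + x * g l * q) * (l * ρ + r * (S + l * (T + (m - 1) * S)))
          - (-(χ + (B Δ' ΔL + ρ * S) + r / 2 * B L L) + r * g l * q)
            * (x * (S + l * (T + (m - 1) * S)))) := by
        rw [hA2, hV]
        field_simp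
        linear_combination (2 * (S + l * (T + (m - 1) * S))) * hDx
      rw [e3]
      simp [hx, hl0, hρne]
    refine ⟨(key _).2 (by field_simp), fun q hq => ?_⟩
    rw [eq_div_iff hgl, mul_comm]; exact (key q).1 hq
  · refine (hlim A V).congr' ?_
    filter_upwards [self_mem_nhdsWithin] with l hl
    have hl0 : l ≠ 0 := hl.1.ne'
    have hp := (hpos l hl).ne'
    rw [hg2]; field_simp
  · intro h0
    refine (hlim Bc 0).congr' ?_
    filter_upwards [self_mem_nhdsWithin] with l hl
    have hl0 : l ≠ 0 := hl.1.ne'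
    have hp := (hpos l hl).ne'
    rw [hg2, h0, hAV h0]; field_simp; ring
  · intro h0 h1
    refine ⟨0, fun l _ => ?_⟩
    simp [h0, hAV h0, h1]
end

section
/- (Potential walls for two-dimensional objects, case C.) Assume κ := k + Σ_i ξ_i ≠ 0. Define D := z/x + (Δ_L·Δ_L)/2 − ( (xχ − rz)/x + Δ'·Δ_L + (a_L + Σ_i η_i)(p − (e/2)k + Σ_i ξ_i(θ_i + e/2)) )·(a_L + Σ_i η_i)/κ. Then there exists λ₀ ∈ (0,1) such that for each λ ∈ (0,λ₀) there is a unique real number Q(λ) with (λ, Q(λ)) on the potential wall W(e^L ch, e^L ch'), and 2λ·Q(λ) → D as λ → 0⁺. In particular, if D ≠ 0 the wall is asymptotic to q = D/(2λ) as λ → 0⁺, and if D = 0 then Q(λ) remains bounded as λ → 0⁺. -/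
open Set Filter

theorem wall_aux (A E κ a c1 a1 G D : ℝ) (hκ : κ ≠ 0) (hD : D = A - E * a / κ)
    (onWall : ℝ → ℝ → Prop)
    (h : ∀ l q : ℝ, onWall l q ↔
      l * (2 + G * l) * (κ + l * c1) * q = A * (κ + l * c1) - E * (a + l * a1)) :
    ∃ l₀ ∈ Ioo (0 : ℝ) 1, ∃ Q : ℝ → ℝ,
      (∀ l ∈ Ioo (0 : ℝ) l₀, onWall l (Q l) ∧ ∀ q : ℝ, onWall l q → q = Q l) ∧
      Tendsto (fun l => 2 * l * Q l) (nhdsWithin 0 (Ioo (0 : ℝ) l₀))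
        (nhds D) ∧
      (D = 0 → ∃ M : ℝ, ∀ l ∈ Ioo (0 : ℝ) l₀, |Q l| ≤ M) := by
  have hκ' : 0 < |κ| := abs_pos.mpr hκ
  have hG0 : 0 < |G| + 1 := by positivity
  have hc0 : 0 < 2 * (|c1| + 1) := by positivity
  obtain ⟨l₀, hl0, hl1, hlG, hlc⟩ : ∃ l₀ : ℝ, 0 < l₀ ∧ l₀ ≤ 1 / 2 ∧ l₀ ≤ 1 / (|G| + 1) ∧
      l₀ ≤ |κ| / (2 * (|c1| + 1)) := by
    refine ⟨min (1 / 2) (min (1 / (|G| + 1)) (|κ| / (2 * (|c1| + 1)))), ?_, ?_, ?_, ?_⟩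
    · have h1 : 0 < 1 / (|G| + 1) := by positivity
      have h2 : 0 < |κ| / (2 * (|c1| + 1)) := by positivity
      exact lt_min (by norm_num) (lt_min h1 h2)
    · exact min_le_left _ _
    · exact (min_le_right _ _).trans (min_le_left _ _)
    · exact (min_le_right _ _).trans (min_le_right _ _)
  have b1 : ∀ l ∈ Ioo (0 : ℝ) l₀, 1 ≤ 2 + G * l := by
    intro l hl
    have h1 : l * (|G| + 1) ≤ 1 := by
      have := hl.2.le.trans hlG
      rwa [le_div_iff₀ hG0] at this
    have h2 := neg_abs_le G
    nlinarith [hl.1, mul_le_mul_of_nonneg_right h2 hl.1.le]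
  have b2 : ∀ l ∈ Ioo (0 : ℝ) l₀, |κ| / 2 ≤ |κ + l * c1| := by
    intro l hl
    have h1 : l * (2 * (|c1| + 1)) ≤ |κ| := by
      have := hl.2.le.trans hlc
      rwa [le_div_iff₀ hc0] at this
    have h2 : |κ| ≤ |κ + l * c1| + |l * c1| := by
      have := abs_sub (κ + l * c1) (l * c1)
      simpa using this
    rw [abs_mul, abs_of_pos hl.1] at h2
    nlinarith [hl.1]
  have n2 : ∀ l ∈ Ioo (0 : ℝ) l₀, κ + l * c1 ≠ 0 := by
    intro l hl h0
    have := b2 l hl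
    rw [h0, abs_zero] at this
    linarith
  have n1 : ∀ l ∈ Ioo (0 : ℝ) l₀, 2 + G * l ≠ 0 := fun l hl => by
    have := b1 l hl
    positivity
  refine ⟨l₀, ⟨hl0, by linarith⟩,
    fun l => (A * (κ + l * c1) - E * (a + l * a1)) / (l * (2 + G * l) * (κ + l * c1)), ?_, ?_, ?_⟩
  · intro l hl
    have hne : l * (2 + G * l) * (κ + l * c1) ≠ 0 :=
      mul_ne_zero (mul_ne_zero hl.1.ne' (n1 l hl)) (n2 l hl)
    refine ⟨?_, ?_⟩
    · rw [h, mul_div_cancel₀ _ hne]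
    · intro q hq
      rw [h] at hq
      rw [eq_div_iff hne, ← hq, mul_comm]
  · have hc : ContinuousAt (fun l : ℝ =>
        2 * (A * (κ + l * c1) - E * (a + l * a1)) / ((2 + G * l) * (κ + l * c1))) 0 := by
      apply ContinuousAt.div
      · fun_prop
      · fun_prop
      · simpa using hκ
    have ht := hc.tendsto.mono_left (nhdsWithin_le_nhds (s := Ioo (0 : ℝ) l₀))
    have hv : 2 * (A * (κ + 0 * c1) - E * (a + 0 * a1)) / ((2 + G * 0) * (κ + 0 * c1)) = D := by
      rw [hD]
      simp only [zero_mul, mul_zero, add_zero]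
      field_simp
    simp only [hv] at ht
    refine ht.congr' ?_
    filter_upwards [self_mem_nhdsWithin] with l hl
    have h0 := hl.1.ne'
    have h1 := n1 l hl
    have h2 := n2 l hl
    field_simp
  · intro hD0
    refine ⟨|A * c1 - E * a1| / (|κ| / 2), ?_⟩
    intro l hl
    have h0 := hl.1.ne'
    have h1 := n1 l hl
    have h2 := n2 l hl
    have hA : A * κ = E * a := by
      rw [hD0] at hD
      field_simp at hD
      linarith
    have e1 : (A * (κ + l * c1) - E * (a + l * a1)) / (l * (2 + G * l) * (κ + l * c1))
        = (A * c1 - E * a1) / ((2 + G * l) * (κ + l * c1)) := by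
      have : A * (κ + l * c1) - E * (a + l * a1) = l * (A * c1 - E * a1) := by
        linear_combination hA
      rw [this, mul_assoc, mul_div_mul_left _ _ h0]
    show |(A * (κ + l * c1) - E * (a + l * a1)) / (l * (2 + G * l) * (κ + l * c1))| ≤ _
    rw [e1, abs_div]
    have b1' := b1 l hl
    have b2' := b2 l hl
    apply div_le_div_of_nonneg_left (abs_nonneg _) (by positivity)
    rw [abs_mul, abs_of_pos (by linarith : 0 < 2 + G * l)]
    nlinarith [abs_nonneg (κ + l * c1)]

/-- Potential walls in the `(λ,0,0,q)`-plane for two-dimensional objects,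
case (C): `ch = (x, 0, z)` with `x ≠ 0`, `xz ≤ 0`,
`ch' = (r, kΘ + pf + Σᵢ ξᵢΘᵢ, χ)` with `κ = k + Σᵢ ξᵢ ≠ 0`. For small
`λ > 0` the potential wall `W(e^L ch, e^L ch')` meets each vertical line in
a unique point `(λ, Q(λ))`, and `2λQ(λ) → D`; in particular if `D ≠ 0` the
wall is asymptotic to `q = D/(2λ)` and if `D = 0` then `Q(λ)` stays bounded
as `λ → 0⁺`. -/
theorem potential_wall_asymptotics_dim_two_caseC
    {ι : Type*} [Fintype ι] {N : Type*} [AddCommGroup N] [Module ℝ N]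
    (B : N →ₗ[ℝ] N →ₗ[ℝ] ℝ) (hsymm : ∀ D D' : N, B D D' = B D' D)
    (e m : ℝ) (Θ f : N) (Θi : ι → N)
    (hΘΘ : B Θ Θ = -e) (hΘiΘi : ∀ i, B (Θi i) (Θi i) = -e)
    (hff : B f f = 0) (hΘf : B Θ f = 1) (hΘif : ∀ i, B (Θi i) f = 1)
    (θ : ι → ℝ) (hθ : ∀ i, θ i = B Θ (Θi i))
    (Hl : ℝ → N) (hHl : ∀ l : ℝ, Hl l = l • (Θ + m • f) + (1 - l) • f)
    (g : ℝ → ℝ) (hg : ∀ l : ℝ, g l = B (Hl l) (Hl l))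
    (x z r k p χ aL bL : ℝ) (ξ η : ι → ℝ)
    (hx : x ≠ 0) (hBog : x * z ≤ 0)
    (κ : ℝ) (hκ : κ = k + ∑ i, ξ i) (hκne : κ ≠ 0)
    (Δi : ι → N) (hΔi : ∀ i, Δi i = Θi i - Θ - (θ i + e) • f)
    (ΔL Δ' : N) (hΔL : ΔL = ∑ i, η i • Δi i) (hΔ' : Δ' = ∑ i, ξ i • Δi i)
    (L ch'1 : N)
    (hL : L = aL • Θ + bL • f + ∑ i, η i • Θi i)
    (hch'1 : ch'1 = k • Θ + p • f + ∑ i, ξ i • Θi i)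
    (D : ℝ)
    (hD : D = z / x + B ΔL ΔL / 2
        - ((x * χ - r * z) / x + B Δ' ΔL
            + (aL + ∑ i, η i) * (p - e / 2 * k + ∑ i, ξ i * (θ i + e / 2)))
          * (aL + ∑ i, η i) / κ)
    (onWall : ℝ → ℝ → Prop)
    (honWall : ∀ l q : ℝ, onWall l q ↔
      (-(z + B L (0 : N) + x / 2 * B L L) + x * g l * q)
          * B (ch'1 + r • L) (Hl l)
        = (-(χ + B L ch'1 + r / 2 * B L L) + r * g l * q)
          * B ((0 : N) + x • L) (Hl l)) :
    ∃ l₀ ∈ Ioo (0 : ℝ) 1, ∃ Q : ℝ → ℝ,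
      (∀ l ∈ Ioo (0 : ℝ) l₀, onWall l (Q l) ∧ ∀ q : ℝ, onWall l q → q = Q l) ∧
      Tendsto (fun l => 2 * l * Q l) (nhdsWithin 0 (Ioo (0 : ℝ) l₀))
        (nhds D) ∧
      (D = 0 → ∃ M : ℝ, ∀ l ∈ Ioo (0 : ℝ) l₀, |Q l| ≤ M) := by
  have hfΘ : B f Θ = 1 := by rw [hsymm, hΘf]
  have dΘ : ∀ i, B (Δi i) Θ = 0 := by
    intro i
    rw [hΔi]
    simp only [map_sub, map_smul, LinearMap.sub_apply, LinearMap.smul_apply, smul_eq_mul]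
    rw [hΘΘ, hfΘ, hsymm, ← hθ]
    ring
  have df : ∀ i, B (Δi i) f = 0 := by
    intro i
    rw [hΔi]
    simp only [map_sub, map_smul, LinearMap.sub_apply, LinearMap.smul_apply, smul_eq_mul]
    rw [hΘif, hΘf, hff]
    ring
  have sΘ : ∀ c : ι → ℝ, B (∑ i, c i • Δi i) Θ = 0 := by
    intro c
    simp [map_sum, LinearMap.sum_apply, dΘ]
  have sf : ∀ c : ι → ℝ, B (∑ i, c i • Δi i) f = 0 := by
    intro c
    simp [map_sum, LinearMap.sum_apply, df]
  have dec : ∀ c : ι → ℝ, ∑ i, c i • Θi i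
      = (∑ i, c i) • Θ + (∑ i, c i * (θ i + e)) • f + ∑ i, c i • Δi i := by
    intro c
    rw [Finset.sum_smul, Finset.sum_smul, ← Finset.sum_add_distrib, ← Finset.sum_add_distrib]
    refine Finset.sum_congr rfl fun i _ => ?_
    rw [hΔi]
    module
  obtain ⟨a, ha⟩ : ∃ a, a = aL + ∑ i, η i := ⟨_, rfl⟩
  obtain ⟨β, hβ⟩ : ∃ β, β = bL + ∑ i, η i * (θ i + e) := ⟨_, rfl⟩
  obtain ⟨π, hπ⟩ : ∃ π, π = p + ∑ i, ξ i * (θ i + e) := ⟨_, rfl⟩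
  have hL' : L = a • Θ + β • f + ΔL := by
    rw [hL, dec, ha, hβ, hΔL]
    module
  have hc' : ch'1 = κ • Θ + π • f + Δ' := by
    rw [hch'1, dec, hκ, hπ, hΔ']
    module
  have q1 : B ΔL Θ = 0 := by rw [hΔL]; exact sΘ η
  have q2 : B ΔL f = 0 := by rw [hΔL]; exact sf η
  have q3 : B Δ' Θ = 0 := by rw [hΔ']; exact sΘ ξ
  have q4 : B Δ' f = 0 := by rw [hΔ']; exact sf ξ
  have q1' : B Θ ΔL = 0 := by rw [hsymm, q1]
  have q2' : B f ΔL = 0 := by rw [hsymm, q2]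
  have q3' : B Θ Δ' = 0 := by rw [hsymm, q3]
  have q4' : B f Δ' = 0 := by rw [hsymm, q4]
  have q5 : B ΔL Δ' = B Δ' ΔL := hsymm _ _
  have hπ' : p - e / 2 * k + ∑ i, ξ i * (θ i + e / 2) = π - e / 2 * κ := by
    have : ∑ i, ξ i * (θ i + e) = ∑ i, ξ i * (θ i + e / 2) + e / 2 * ∑ i, ξ i := by
      rw [Finset.mul_sum, ← Finset.sum_add_distrib]
      exact Finset.sum_congr rfl fun i _ => by ring
    rw [hπ, hκ, this]
    ring
  have hLL : B L L = -e * a ^ 2 + 2 * a * β + B ΔL ΔL := by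
    rw [hL']
    simp only [map_add, map_smul, LinearMap.add_apply, LinearMap.smul_apply, smul_eq_mul,
      hΘΘ, hff, hΘf, hfΘ, q1, q2, q1', q2']
    ring
  have hLc : B L ch'1 = -e * a * κ + a * π + β * κ + B Δ' ΔL := by
    rw [hL', hc']
    simp only [map_add, map_smul, LinearMap.add_apply, LinearMap.smul_apply, smul_eq_mul,
      hΘΘ, hff, hΘf, hfΘ, q1, q2, q3', q4', q5]
    ring
  have hgl : ∀ l, g l = l * (2 + (2 * m - 2 - e) * l) := by
    intro l
    rw [hg, hHl]
    simp only [map_add, map_smul, LinearMap.add_apply, LinearMap.smul_apply, smul_eq_mul,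
      hΘΘ, hff, hΘf, hfΘ]
    ring
  have hLH : ∀ l, B L (Hl l) = a + l * (-e * a + β + (m - 1) * a) := by
    intro l
    rw [hL', hHl]
    simp only [map_add, map_smul, LinearMap.add_apply, LinearMap.smul_apply, smul_eq_mul,
      hΘΘ, hff, hΘf, hfΘ, q1, q2]
    ring
  have hcH : ∀ l, B ch'1 (Hl l) = κ + l * (-e * κ + π + (m - 1) * κ) := by
    intro l
    rw [hc', hHl]
    simp only [map_add, map_smul, LinearMap.add_apply, LinearMap.smul_apply, smul_eq_mul,
      hΘΘ, hff, hΘf, hfΘ, q3, q4]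
    ring
  refine wall_aux (z / x + B L L / 2) ((x * χ - r * z) / x + B L ch'1) κ a
    (-e * κ + π + (m - 1) * κ) (-e * a + β + (m - 1) * a) (2 * m - 2 - e) D hκne ?_ onWall ?_
  · rw [hD, ← ha, hπ', hLL, hLc]
    field_simp
    ring
  · intro l q
    rw [honWall, ← hgl, ← hLH, ← hcH]
    simp only [map_add, map_smul, map_zero, LinearMap.add_apply, LinearMap.smul_apply, smul_eq_mul,
      zero_add, add_zero]
    rw [← sub_eq_zero, ← sub_eq_zero (a := g l * (B ch'1) (Hl l) * q)]
    have key : (-(z + x / 2 * B L L) + x * g l * q) * (B ch'1 (Hl l) + r * B L (Hl l))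
        - (-(χ + B L ch'1 + r / 2 * B L L) + r * g l * q) * (x * B L (Hl l))
        = x * (g l * B ch'1 (Hl l) * q - ((z / x + B L L / 2) * B ch'1 (Hl l)
          - ((x * χ - r * z) / x + B L ch'1) * B L (Hl l))) := by
      field_simp
      ring
    rw [key]
    simp [hx]
end

section
/- (Potential walls for one-dimensional objects, case A.) Assume k + Σ_i ξ_i = 0 and ρ := p − ek + Σ_i ξ_i θ_i > 0 (so that ch₁·H_λ = ρλ > 0 for all 0 < λ < 1). Define A := −( z + Δ·Δ_L + (a_L + Σ_i η_i)(p − (e/2)k + Σ_i ξ_i(θ_i + e/2)) )·(a_L + Σ_i η_i)/ρ and B := χ/r + (Δ_L·Δ_L)/2 − ( b_L − e·a_L + (e/2)(a_L + Σ_i η_i) + Σ_i η_i θ_i )·( z + Δ·Δ_L )/ρ. Then there exists λ₀ ∈ (0,1) such that for each λ ∈ (0,λ₀) there is a unique real number Q(λ) with (λ, Q(λ)) on the potential wall W(e^L ch, e^L ch'); moreover 2λ²·Q(λ) → A as λ → 0⁺; if A = 0 then 2λ·Q(λ) → B as λ → 0⁺; and if A = B = 0 then Q(λ) remains bounded as λ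 → 0⁺. -/
open Set Filter

theorem aux_decomp {ι : Type*} [Fintype ι] {N : Type*} [AddCommGroup N] [Module ℝ N]
    (e a b : ℝ) (Θ f : N) (Θi : ι → N) (θ η : ι → ℝ) :
    a • Θ + b • f + ∑ i, η i • Θi i
      = (a + ∑ i, η i) • Θ + (b + ∑ i, η i * θ i + e * ∑ i, η i) • f
        + ∑ i, η i • (Θi i - Θ - (θ i + e) • f) := by
  have h : ∑ i, η i • (Θi i - Θ - (θ i + e) • f)
      = ∑ i, η i • Θi i - (∑ i, η i) • Θ - (∑ i, η i * θ i + e * ∑ i, η i) • f := by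
    rw [Finset.mul_sum, ← Finset.sum_add_distrib, Finset.sum_smul, Finset.sum_smul,
      ← Finset.sum_sub_distrib, ← Finset.sum_sub_distrib]
    refine Finset.sum_congr rfl fun i _ => ?_
    module
  rw [h]
  module

theorem aux_orth {ι : Type*} [Fintype ι] {N : Type*} [AddCommGroup N] [Module ℝ N]
    (B : N →ₗ[ℝ] N →ₗ[ℝ] ℝ) (η : ι → ℝ) (v : ι → N) (x : N) (h : ∀ i, B (v i) x = 0) :
    B (∑ i, η i • v i) x = 0 := by
  simp [h]

/-- Potential walls in the `(λ,0,0,q)`-plane for one-dimensional objects,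
case (A): `ch = (0, kΘ + pf + Σᵢ ξᵢΘᵢ, z)` with `k + Σᵢ ξᵢ = 0` and
`ρ = p − ek + Σᵢ ξᵢθᵢ > 0` (so `ch₁·H_λ = ρλ > 0` for all `0 < λ < 1`),
`ch' = (r, 0, χ)` with `r ≠ 0`. For small `λ > 0` the potential wall
`W(e^L ch, e^L ch')` meets each vertical line in a unique point `(λ, Q(λ))`,
and `2λ²Q(λ) → A`; if `A = 0` then `2λQ(λ) → B`; if `A = B = 0` then `Q(λ)`
stays bounded as `λ → 0⁺`. -/
theorem potential_wall_asymptotics_dim_one_caseA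
    {ι : Type*} [Fintype ι] {N : Type*} [AddCommGroup N] [Module ℝ N]
    (B : N →ₗ[ℝ] N →ₗ[ℝ] ℝ) (hsymm : ∀ D D' : N, B D D' = B D' D)
    (e m : ℝ) (Θ f : N) (Θi : ι → N)
    (hΘΘ : B Θ Θ = -e) (hΘiΘi : ∀ i, B (Θi i) (Θi i) = -e)
    (hff : B f f = 0) (hΘf : B Θ f = 1) (hΘif : ∀ i, B (Θi i) f = 1)
    (θ : ι → ℝ) (hθ : ∀ i, θ i = B Θ (Θi i))
    (Hl : ℝ → N) (hHl : ∀ l : ℝ, Hl l = l • (Θ + m • f) + (1 - l) • f)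
    (g : ℝ → ℝ) (hg : ∀ l : ℝ, g l = B (Hl l) (Hl l))
    (z r k p χ aL bL : ℝ) (ξ η : ι → ℝ)
    (hr : r ≠ 0)
    (hk : k + ∑ i, ξ i = 0)
    (ρ : ℝ) (hρ : ρ = p - e * k + ∑ i, ξ i * θ i) (hρpos : 0 < ρ)
    (Δi : ι → N) (hΔi : ∀ i, Δi i = Θi i - Θ - (θ i + e) • f)
    (ΔL Δ : N) (hΔL : ΔL = ∑ i, η i • Δi i) (hΔ : Δ = ∑ i, ξ i • Δi i)
    (L ch1 : N)
    (hL : L = aL • Θ + bL • f + ∑ i, η i • Θi i)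
    (hch1 : ch1 = k • Θ + p • f + ∑ i, ξ i • Θi i)
    (A Bc : ℝ)
    (hA : A = -(z + B Δ ΔL
        + (aL + ∑ i, η i) * (p - e / 2 * k + ∑ i, ξ i * (θ i + e / 2)))
        * (aL + ∑ i, η i) / ρ)
    (hBc : Bc = χ / r + B ΔL ΔL / 2
        - (bL - e * aL + e / 2 * (aL + ∑ i, η i) + ∑ i, η i * θ i)
          * (z + B Δ ΔL) / ρ)
    (onWall : ℝ → ℝ → Prop)
    (honWall : ∀ l q : ℝ, onWall l q ↔
      (-(z + B L ch1) + 0 * g l * q) * B ((0 : N) + r • L) (Hl l)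
        = (-(χ + B L (0 : N) + r / 2 * B L L) + r * g l * q)
          * B ch1 (Hl l)) :
    (∀ l : ℝ, 0 < l → l < 1 → B ch1 (Hl l) = ρ * l ∧ 0 < ρ * l) ∧
    ∃ l₀ ∈ Ioo (0 : ℝ) 1, ∃ Q : ℝ → ℝ,
      (∀ l ∈ Ioo (0 : ℝ) l₀, onWall l (Q l) ∧ ∀ q : ℝ, onWall l q → q = Q l) ∧
      Tendsto (fun l => 2 * l ^ 2 * Q l) (nhdsWithin 0 (Ioo (0 : ℝ) l₀))
        (nhds A) ∧
      (A = 0 →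
        Tendsto (fun l => 2 * l * Q l) (nhdsWithin 0 (Ioo (0 : ℝ) l₀))
          (nhds Bc)) ∧
      (A = 0 → Bc = 0 → ∃ M : ℝ, ∀ l ∈ Ioo (0 : ℝ) l₀, |Q l| ≤ M) := by
  have hfΘ : B f Θ = 1 := by rw [hsymm]; exact hΘf
  have hdΘ : ∀ i, B (Θi i - Θ - (θ i + e) • f) Θ = 0 := by
    intro i
    simp only [map_sub, map_smul, LinearMap.sub_apply, LinearMap.smul_apply, smul_eq_mul,
      hΘΘ, hfΘ, hsymm (Θi i) Θ, ← hθ]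
    ring
  have hdf : ∀ i, B (Θi i - Θ - (θ i + e) • f) f = 0 := by
    intro i
    simp only [map_sub, map_smul, LinearMap.sub_apply, LinearMap.smul_apply, smul_eq_mul,
      hΘf, hff, hΘif]
    ring
  obtain rfl : Δi = fun i => Θi i - Θ - (θ i + e) • f := funext hΔi
  have hLd := aux_decomp e aL bL Θ f Θi θ η
  rw [← hL, ← hΔL] at hLd
  have hcd := aux_decomp e k p Θ f Θi θ ξ
  rw [← hch1, ← hΔ, hk] at hcd
  have hS : ∑ i, ξ i = -k := by linarith
  have hπ : p + ∑ i, ξ i * θ i + e * ∑ i, ξ i = ρ := by rw [hS, hρ]; ring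
  rw [hπ, zero_smul, zero_add] at hcd
  have hLΘ : B ΔL Θ = 0 := by rw [hΔL]; exact aux_orth B _ _ _ hdΘ
  have hLf : B ΔL f = 0 := by rw [hΔL]; exact aux_orth B _ _ _ hdf
  have hDΘ : B Δ Θ = 0 := by rw [hΔ]; exact aux_orth B _ _ _ hdΘ
  have hDf : B Δ f = 0 := by rw [hΔ]; exact aux_orth B _ _ _ hdf
  have hΘL : B Θ ΔL = 0 := by rw [hsymm]; exact hLΘ
  have hfL : B f ΔL = 0 := by rw [hsymm]; exact hLf
  have hΘD : B Θ Δ = 0 := by rw [hsymm]; exact hDΘ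
  have hfD : B f Δ = 0 := by rw [hsymm]; exact hDf
  have hsplit : ∑ i, ξ i * (θ i + e / 2) = ∑ i, ξ i * θ i + e / 2 * ∑ i, ξ i := by
    rw [Finset.mul_sum, ← Finset.sum_add_distrib]
    exact Finset.sum_congr rfl fun i _ => by ring
  have hbr : p - e / 2 * k + ∑ i, ξ i * (θ i + e / 2) = ρ := by
    rw [hsplit, hS, hρ]; ring
  rw [hbr] at hA
  obtain ⟨α, hα⟩ : ∃ α, α = aL + ∑ i, η i := ⟨_, rfl⟩
  obtain ⟨β, hβ⟩ : ∃ β, β = bL + ∑ i, η i * θ i + e * ∑ i, η i := ⟨_, rfl⟩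
  rw [← hα] at hA
  have hbr2 : bL - e * aL + e / 2 * (aL + ∑ i, η i) + ∑ i, η i * θ i = β - e / 2 * α := by
    rw [hβ, hα]; ring
  rw [hbr2] at hBc
  rw [← hα, ← hβ] at hLd
  have hcH : ∀ l, B ch1 (Hl l) = ρ * l := by
    intro l
    rw [hHl, hcd]
    simp only [map_add, map_smul, LinearMap.add_apply, LinearMap.smul_apply, smul_eq_mul,
      hff, hfΘ, hDΘ, hDf]
    ring
  have hLH : ∀ l, B ((0 : N) + r • L) (Hl l) = r * (α + l * (β + (m - e - 1) * α)) := by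
    intro l
    rw [hHl, hLd]
    simp only [map_add, map_smul, LinearMap.add_apply, LinearMap.smul_apply, smul_eq_mul,
      map_zero, LinearMap.zero_apply,
      hff, hfΘ, hΘf, hΘΘ, hLΘ, hLf]
    ring
  have hgl : ∀ l, g l = 2 * l * (1 + (m - e / 2 - 1) * l) := by
    intro l
    rw [hg, hHl]
    simp only [map_add, map_smul, LinearMap.add_apply, LinearMap.smul_apply, smul_eq_mul,
      hff, hfΘ, hΘf, hΘΘ]
    ring
  have hLc : B L ch1 = α * ρ + B Δ ΔL := by
    rw [hLd, hcd]
    simp only [map_add, map_smul, LinearMap.add_apply, LinearMap.smul_apply, smul_eq_mul,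
      hff, hfΘ, hΘf, hΘΘ, hLΘ, hLf, hΘD, hfD, hsymm ΔL Δ]
    ring
  have hLL : B L L = -e * α ^ 2 + 2 * α * β + B ΔL ΔL := by
    rw [hLd]
    simp only [map_add, map_smul, LinearMap.add_apply, LinearMap.smul_apply, smul_eq_mul,
      hff, hfΘ, hΘf, hΘΘ, hLΘ, hLf, hΘL, hfL]
    ring
  have hρ0 : ρ ≠ 0 := hρpos.ne'
  refine ⟨fun l hl _ => ⟨hcH l, mul_pos hρpos hl⟩, ?_⟩
  clear hcd hLd hbr hbr2 hsplit
  generalize m - e / 2 - 1 = c at hgl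
  generalize B Δ ΔL = u at *
  generalize B ΔL ΔL = v at *
  obtain ⟨w, hw⟩ : ∃ w, w = z + u + α * ρ := ⟨_, rfl⟩
  obtain ⟨C, hC⟩ : ∃ C, C = χ / r + (-e * α ^ 2 + 2 * α * β + v) / 2
    - w * (β + (m - e - 1) * α) / ρ := ⟨_, rfl⟩
  have hA' : A = -(w * α) / ρ := by rw [hA, hw]; ring
  have hCB : A = 0 → C = Bc := by
    intro h0
    have hwa : w * α = 0 := by
      rw [hA'] at h0
      simpa [hρ0] using h0
    have hu : u = w - α * ρ - z := by rw [hw]; ring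
    have : C - Bc = -(e / 2 + (m - e - 1)) * (w * α) / ρ := by
      rw [hC, hBc, hu]; field_simp; ring
    rw [hwa] at this
    simp at this
    linarith
  have hc1 : 0 < |c| + 1 := by positivity
  have hl0 : 1 / (2 * (|c| + 1)) ∈ Ioo (0 : ℝ) 1 := by
    refine ⟨by positivity, ?_⟩
    rw [div_lt_one (by positivity)]
    linarith [abs_nonneg c]
  have hpos : ∀ l ∈ Ioo (0 : ℝ) (1 / (2 * (|c| + 1))), 0 < 1 + c * l := by
    intro l hl
    have h1 := hl.2
    rw [lt_div_iff₀ (by positivity)] at h1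
    have h2 := mul_le_mul_of_nonneg_right (neg_abs_le c) hl.1.le
    nlinarith [hl.1]
  have hden : Tendsto (fun l : ℝ => 1 + c * l)
      (nhdsWithin 0 (Ioo (0 : ℝ) (1 / (2 * (|c| + 1))))) (nhds 1) := by
    have : Continuous (fun l : ℝ => 1 + c * l) := by fun_prop
    have := this.tendsto 0
    simp only [mul_zero, add_zero] at this
    exact this.mono_left nhdsWithin_le_nhds
  have hnum : Tendsto (fun l : ℝ => A + C * l)
      (nhdsWithin 0 (Ioo (0 : ℝ) (1 / (2 * (|c| + 1))))) (nhds A) := by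
    have : Continuous (fun l : ℝ => A + C * l) := by fun_prop
    have := this.tendsto 0
    simp only [mul_zero, add_zero] at this
    exact this.mono_left nhdsWithin_le_nhds
  refine ⟨1 / (2 * (|c| + 1)), hl0, fun l => (A + C * l) / (2 * l ^ 2 * (1 + c * l)), ?_, ?_, ?_, ?_⟩
  · intro l hl
    have hl1 : l ≠ 0 := hl.1.ne'
    have hp := (hpos l hl).ne'
    have key : ∀ q, onWall l q ↔ q = (A + C * l) / (2 * l ^ 2 * (1 + c * l)) := by
      intro q
      rw [honWall, hcH, hLH, hgl, hLc, hLL, map_zero, eq_div_iff (by positivity)]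
      have hz : z = w - u - α * ρ := by rw [hw]; ring
      have e1 : (-(χ + 0 + r / 2 * (-e * α ^ 2 + 2 * α * β + v))
            + r * (2 * l * (1 + c * l)) * q) * (ρ * l)
          - (-(z + (α * ρ + u)) + 0 * (2 * l * (1 + c * l)) * q)
            * (r * (α + l * (β + (m - e - 1) * α)))
          = r * ρ * (q * (2 * l ^ 2 * (1 + c * l)) - (A + C * l)) := by
        rw [hA', hC, hz]; field_simp; ring
      constructor
      · intro h
        rw [h, sub_self] at e1
        have := (mul_eq_zero.mp e1.symm).resolve_left (mul_ne_zero hr hρ0)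
        linarith
      · intro h
        rw [h, sub_self, mul_zero] at e1
        linarith
    exact ⟨(key _).2 rfl, fun q hq => (key q).1 hq⟩
  · have := hnum.div hden one_ne_zero
    rw [div_one] at this
    refine this.congr' ?_
    filter_upwards [self_mem_nhdsWithin] with l hl
    have hl1 : l ≠ 0 := hl.1.ne'
    have hp := (hpos l hl).ne'
    simp only [Pi.div_apply]
    field_simp
  · intro h0
    have := (tendsto_const_nhds (x := Bc)).div hden one_ne_zero
    rw [div_one] at this
    refine this.congr' ?_
    filter_upwards [self_mem_nhdsWithin] with l hl
    have hl1 : l ≠ 0 := hl.1.ne'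
    have hp := (hpos l hl).ne'
    rw [h0, hCB h0]
    simp only [Pi.div_apply]
    field_simp
    ring
  · intro h0 h1
    refine ⟨0, fun l _ => ?_⟩
    rw [hCB h0, h0, h1]
    simp
end

section
/- (Potential walls for one-dimensional objects, case B.) Assume κ := k + Σ_i ξ_i > 0 (so that ch₁·H_λ > 0 for all sufficiently small λ > 0). Define D := χ/r + (Δ_L·Δ_L)/2 − ( z + Δ·Δ_L + (a_L + Σ_i η_i)(p − (e/2)k + Σ_i ξ_i(θ_i + e/2)) )·(a_L + Σ_i η_i)/κ. Then there exists λ₀ ∈ (0,1) such that for each λ ∈ (0,λ₀) there is a unique real number Q(λ) with (λ, Q(λ)) on the potential wall W(e^L ch, e^L ch'), and 2λ·Q(λ) → D as λ → 0⁺. In particular, if D ≠ 0 the wall is asymptotic to q = D/(2λ) as λ → 0⁺, and if D = 0 then Q(λ) remains bounded as λ → 0⁺. -/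
open Set Filter

lemma wall_aux_s14 (A C α κ u v w : ℝ) (hκ : 0 < κ) :
    ∃ l₀ ∈ Ioo (0 : ℝ) 1, (∀ l ∈ Ioo (0 : ℝ) l₀, κ / 2 < κ + l * v ∧ 1 / 2 < 1 + w * l) ∧
      Tendsto (fun l => 2 * l * ((A - C * (α + l * u) / (κ + l * v)) / (2 * l * (1 + w * l))))
        (nhdsWithin 0 (Ioo (0 : ℝ) l₀)) (nhds (A - C * α / κ)) ∧
      (A - C * α / κ = 0 → ∃ M : ℝ, ∀ l ∈ Ioo (0 : ℝ) l₀,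
        |(A - C * (α + l * u) / (κ + l * v)) / (2 * l * (1 + w * l))| ≤ M) := by
  have hden : 0 < 2 * κ + 2 * |v| + 2 * κ * |w| := by positivity
  have key : ∀ l ∈ Ioo (0 : ℝ) (κ / (2 * κ + 2 * |v| + 2 * κ * |w|)),
      κ / 2 < κ + l * v ∧ 1 / 2 < 1 + w * l := by
    rintro l ⟨h0, h1⟩
    rw [lt_div_iff₀ hden] at h1
    have hv : -(l * |v|) ≤ l * v := by
      have := mul_le_mul_of_nonneg_left (neg_abs_le v) h0.le
      linarith
    have hw : -(l * |w|) ≤ w * l := by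
      have := mul_le_mul_of_nonneg_left (neg_abs_le w) h0.le
      linarith
    have h2 : 0 ≤ l * |v| := by positivity
    have h3 : 0 ≤ l * |w| := by positivity
    have h4 : 0 ≤ κ * (l * |w|) := by positivity
    have h5 : 0 < κ * l := by positivity
    constructor
    · nlinarith
    · have : l * |w| < 1 / 2 := by
        by_contra hc
        push Not at hc
        have := mul_le_mul_of_nonneg_left hc hκ.le
        nlinarith
      linarith
  refine ⟨_, ⟨by positivity, ?_⟩, key, ?_, ?_⟩
  · rw [div_lt_one hden]
    have : 0 ≤ 2 * |v| + 2 * κ * |w| := by positivity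
    linarith
  · have hc : Tendsto (fun l : ℝ => (A - C * (α + l * u) / (κ + l * v)) / (1 + w * l))
        (nhds 0) (nhds ((A - C * (α + 0 * u) / (κ + 0 * v)) / (1 + w * 0))) := by
      have : ContinuousAt (fun l : ℝ => (A - C * (α + l * u) / (κ + l * v)) / (1 + w * l)) 0 := by
        refine ContinuousAt.div (ContinuousAt.sub (by fun_prop)
          (ContinuousAt.div (by fun_prop) (by fun_prop) ?_)) (by fun_prop) ?_
        · simpa using hκ.ne'
        · simp
      exact this
    simp only [zero_mul, add_zero, mul_zero, div_one] at hc
    refine (hc.mono_left nhdsWithin_le_nhds).congr' ?_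
    filter_upwards [self_mem_nhdsWithin] with l hl
    obtain ⟨h1, h2⟩ := key l hl
    have h0 : l ≠ 0 := hl.1.ne'
    have h3 : 1 + w * l ≠ 0 := by linarith
    rw [mul_div_assoc', mul_div_mul_left _ _ (by simpa using h0)]
  · intro h
    refine ⟨|C * (u * κ - α * v)| / (κ ^ 2 / 2), fun l hl => ?_⟩
    obtain ⟨h1, h2⟩ := key l hl
    have h0 : l ≠ 0 := hl.1.ne'
    have h3 : 0 < 1 + w * l := by linarith
    have h4 : 0 < κ + l * v := by linarith
    have hA : A = C * α / κ := by linarith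
    have : (A - C * (α + l * u) / (κ + l * v)) / (2 * l * (1 + w * l))
        = -(C * (u * κ - α * v)) / (κ * (κ + l * v) * (2 * (1 + w * l))) := by
      rw [hA]
      have h3' := h3.ne'
      have h4' := h4.ne'
      have hκ' := hκ.ne'
      rw [div_sub_div _ _ hκ' h4', div_div, div_eq_div_iff (by positivity) (by positivity)]
      ring
    rw [this, abs_div, abs_neg,
      abs_of_pos (show 0 < κ * (κ + l * v) * (2 * (1 + w * l)) by positivity)]
    apply div_le_div_of_nonneg_left (abs_nonneg _) (by positivity)
    have h5 : κ * (κ / 2) ≤ κ * (κ + l * v) := mul_le_mul_of_nonneg_left h1.le hκ.le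
    have h6 : 0 < κ * (κ + l * v) := by positivity
    nlinarith

/-- Potential walls in the `(λ,0,0,q)`-plane for one-dimensional objects,
case (B): `ch = (0, kΘ + pf + Σᵢ ξᵢΘᵢ, z)` with `κ = k + Σᵢ ξᵢ > 0`
(so `ch₁·H_λ > 0` for all sufficiently small `λ > 0`), `ch' = (r, 0, χ)` with
`r ≠ 0`. For small `λ > 0` the potential wall `W(e^L ch, e^L ch')` meets each
vertical line in a unique point `(λ, Q(λ))`, and `2λQ(λ) → D`; in particular
if `D ≠ 0` the wall is asymptotic to `q = D/(2λ)` and if `D = 0` then `Q(λ)`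
remains bounded as `λ → 0⁺`. -/
theorem potential_wall_asymptotics_dim_one_caseB
    {ι : Type*} [Fintype ι] {N : Type*} [AddCommGroup N] [Module ℝ N]
    (B : N →ₗ[ℝ] N →ₗ[ℝ] ℝ) (hsymm : ∀ D D' : N, B D D' = B D' D)
    (e m : ℝ) (Θ f : N) (Θi : ι → N)
    (hΘΘ : B Θ Θ = -e) (hΘiΘi : ∀ i, B (Θi i) (Θi i) = -e)
    (hff : B f f = 0) (hΘf : B Θ f = 1) (hΘif : ∀ i, B (Θi i) f = 1)
    (θ : ι → ℝ) (hθ : ∀ i, θ i = B Θ (Θi i))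
    (Hl : ℝ → N) (hHl : ∀ l : ℝ, Hl l = l • (Θ + m • f) + (1 - l) • f)
    (g : ℝ → ℝ) (hg : ∀ l : ℝ, g l = B (Hl l) (Hl l))
    (z r k p χ aL bL : ℝ) (ξ η : ι → ℝ)
    (hr : r ≠ 0)
    (κ : ℝ) (hκ : κ = k + ∑ i, ξ i) (hκpos : 0 < κ)
    (Δi : ι → N) (hΔi : ∀ i, Δi i = Θi i - Θ - (θ i + e) • f)
    (ΔL Δ : N) (hΔL : ΔL = ∑ i, η i • Δi i) (hΔ : Δ = ∑ i, ξ i • Δi i)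
    (L ch1 : N)
    (hL : L = aL • Θ + bL • f + ∑ i, η i • Θi i)
    (hch1 : ch1 = k • Θ + p • f + ∑ i, ξ i • Θi i)
    (D : ℝ)
    (hD : D = χ / r + B ΔL ΔL / 2
        - (z + B Δ ΔL
            + (aL + ∑ i, η i) * (p - e / 2 * k + ∑ i, ξ i * (θ i + e / 2)))
          * (aL + ∑ i, η i) / κ)
    (onWall : ℝ → ℝ → Prop)
    (honWall : ∀ l q : ℝ, onWall l q ↔
      (-(z + B L ch1) + 0 * g l * q) * B ((0 : N) + r • L) (Hl l)
        = (-(χ + B L (0 : N) + r / 2 * B L L) + r * g l * q)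
          * B ch1 (Hl l)) :
    (∃ l₁ ∈ Ioo (0 : ℝ) 1, ∀ l ∈ Ioo (0 : ℝ) l₁, 0 < B ch1 (Hl l)) ∧
    ∃ l₀ ∈ Ioo (0 : ℝ) 1, ∃ Q : ℝ → ℝ,
      (∀ l ∈ Ioo (0 : ℝ) l₀, onWall l (Q l) ∧ ∀ q : ℝ, onWall l q → q = Q l) ∧
      Tendsto (fun l => 2 * l * Q l) (nhdsWithin 0 (Ioo (0 : ℝ) l₀))
        (nhds D) ∧
      (D = 0 → ∃ M : ℝ, ∀ l ∈ Ioo (0 : ℝ) l₀, |Q l| ≤ M) := by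
  have hfΘ : B f Θ = 1 := by rw [hsymm, hΘf]
  have hΔf : ∀ i, B (Δi i) f = 0 := by
    intro i
    simp [hΔi, hΘif, hΘf, hff]
  have hΔΘ : ∀ i, B (Δi i) Θ = 0 := by
    intro i
    simp [hΔi, hfΘ, hΘΘ, hsymm (Θi i) Θ, ← hθ]
  have dec : ∀ (a b : ℝ) (c : ι → ℝ), a • Θ + b • f + ∑ i, c i • Θi i
      = (a + ∑ i, c i) • Θ + (b + ∑ i, c i * (θ i + e)) • f + ∑ i, c i • Δi i := by
    intro a b c
    simp only [hΔi, smul_sub, Finset.sum_sub_distrib, add_smul, Finset.sum_smul, smul_add, mul_smul,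
      Finset.sum_add_distrib, mul_add]
    abel
  have gf : ∀ c : ι → ℝ, B (∑ i, c i • Δi i) f = 0 := by
    intro c; simp [hΔf]
  have gΘ : ∀ c : ι → ℝ, B (∑ i, c i • Δi i) Θ = 0 := by
    intro c; simp [hΔΘ]
  have h1f : B ΔL f = 0 := by rw [hΔL]; exact gf _
  have h1Θ : B ΔL Θ = 0 := by rw [hΔL]; exact gΘ _
  have h2f : B Δ f = 0 := by rw [hΔ]; exact gf _
  have h2Θ : B Δ Θ = 0 := by rw [hΔ]; exact gΘ _
  rw [dec, ← hΔL] at hL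
  rw [dec, ← hΔ, ← hκ] at hch1
  have hsum : p - e / 2 * k + ∑ i, ξ i * (θ i + e / 2)
      = (p + ∑ i, ξ i * (θ i + e)) - e / 2 * κ := by
    have : ∑ i, ξ i * (θ i + e / 2) = ∑ i, ξ i * (θ i + e) - e / 2 * ∑ i, ξ i := by
      rw [Finset.mul_sum, ← Finset.sum_sub_distrib]
      exact Finset.sum_congr rfl fun i _ => by ring
    rw [this, hκ]; ring
  rw [hsum] at hD
  generalize aL + ∑ i, η i = α at *
  generalize bL + ∑ i, η i * (θ i + e) = β at *
  generalize p + ∑ i, ξ i * (θ i + e) = π at *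
  have h1f' : B f ΔL = 0 := by rw [hsymm, h1f]
  have h1Θ' : B Θ ΔL = 0 := by rw [hsymm, h1Θ]
  have h2f' : B f Δ = 0 := by rw [hsymm, h2f]
  have h2Θ' : B Θ Δ = 0 := by rw [hsymm, h2Θ]
  have hLL : B L L = -e * α ^ 2 + 2 * α * β + B ΔL ΔL := by
    simp [hL, h1f, h1Θ, h1f', h1Θ', hff, hΘf, hfΘ, hΘΘ]; ring
  have hLc : B L ch1 = -e * α * κ + α * π + β * κ + B Δ ΔL := by
    simp [hL, hch1, h1f, h1Θ, h2f', h2Θ', hff, hΘf, hfΘ, hΘΘ, hsymm ΔL Δ]; ring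
  have hLH : ∀ l, B L (Hl l) = α + l * (-e * α + β + m * α - α) := by
    intro l
    simp [hL, hHl, h1f, h1Θ, hff, hΘf, hfΘ, hΘΘ]; ring
  have hcH : ∀ l, B ch1 (Hl l) = κ + l * (-e * κ + π + m * κ - κ) := by
    intro l
    simp [hch1, hHl, h2f, h2Θ, hff, hΘf, hfΘ, hΘΘ]; ring
  have hgl : ∀ l, g l = 2 * l * (1 + (m - e / 2 - 1) * l) := by
    intro l
    simp [hg, hHl, hff, hΘf, hfΘ, hΘΘ]; ring
  have hκ0 := hκpos.ne'
  have hD' : D = (χ / r + B L L / 2) - (z + B L ch1) * α / κ := by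
    rw [hD, hLL, hLc]; field_simp; ring
  obtain ⟨l₀, hl₀, key, hlim, hbd⟩ := wall_aux_s14 (χ / r + B L L / 2) (z + B L ch1) α κ
    (-e * α + β + m * α - α) (-e * κ + π + m * κ - κ) (m - e / 2 - 1) hκpos
  rw [← hD'] at hlim hbd
  refine ⟨⟨l₀, hl₀, fun l hl => ?_⟩, l₀, hl₀, _, fun l hl => ?_, hlim, hbd⟩
  · rw [hcH]; linarith [(key l hl).1]
  · obtain ⟨h1, h2⟩ := key l hl
    have hc0 : κ + l * (-e * κ + π + m * κ - κ) ≠ 0 := by linarith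
    have hw0 : 1 + (m - e / 2 - 1) * l ≠ 0 := by linarith
    have hg0 : 2 * l * (1 + (m - e / 2 - 1) * l) ≠ 0 :=
      mul_ne_zero (mul_ne_zero two_ne_zero hl.1.ne') hw0
    have hiff : ∀ q, onWall l q ↔ q = (χ / r + B L L / 2 - (z + B L ch1) *
        (α + l * (-e * α + β + m * α - α)) / (κ + l * (-e * κ + π + m * κ - κ))) /
        (2 * l * (1 + (m - e / 2 - 1) * l)) := by
      intro q
      rw [honWall, hcH, hgl, zero_add, map_smul, LinearMap.smul_apply, hLH, smul_eq_mul, map_zero]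
      generalize κ + l * (-e * κ + π + m * κ - κ) = c at *
      generalize 2 * l * (1 + (m - e / 2 - 1) * l) = G at *
      generalize α + l * (-e * α + β + m * α - α) = b
      generalize B L L = x
      generalize B L ch1 = y
      rw [eq_div_iff hg0, eq_sub_iff_add_eq,
        ← mul_right_inj' (a := r * c) (b := q * G + (z + y) * b / c) (mul_ne_zero hr hc0)]
      have e1 : r * c * (q * G + (z + y) * b / c) = r * c * q * G + r * (z + y) * b := by
        field_simp
      have e2 : r * c * (χ / r + x / 2) = c * χ + r * c * x / 2 := by
        field_simp
      rw [e1, e2]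
      constructor <;> intro h <;> linarith
    exact ⟨(hiff _).2 rfl, fun q hq => (hiff q).1 hq⟩
end

section
/- Let e > 0 and m be real numbers and let a_L > 1 be an integer. Consider the Chern characters ch^a := (1, a_L·Θ, −(e/2)a_L²) and ch^b := (1, (a_L−1)·Θ, −(e/2)(a_L−1)²) (those of the line bundles O_X(a_LΘ) and O_X((a_L−1)Θ)). Then there exists λ₀ ∈ (0,1) such that for every λ ∈ (0,λ₀) there is a unique real number Q(λ) with (λ, Q(λ)) on the potential wall W(ch^a, ch^b), and 2λ·Q(λ) → (e/2)·a_L·(a_L−1) as λ → 0⁺; i.e. the wall is asymptotic to q = e·a_L(a_L−1)/(4λ) as λ → 0⁺. -/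
open Set Filter

/-- On a Picard-rank-two Weierstraß elliptic surface with `e > 0`, the unique
potential wall `W(ch(O_X(a_LΘ)), ch(O_X((a_L−1)Θ)))` in the `(λ,0,0,q)`-plane
(for an integer `a_L > 1`) meets each vertical line `λ = const`, for small
`λ > 0`, in a unique point `(λ, Q(λ))`, with
`2λ·Q(λ) → (e/2)a_L(a_L−1)` as `λ → 0⁺`; i.e. the wall is asymptotic to
`q = e·a_L(a_L−1)/(4λ)`. -/
theorem line_bundle_wall_asymptotic
    {N : Type*} [AddCommGroup N] [Module ℝ N]
    (B : N →ₗ[ℝ] N →ₗ[ℝ] ℝ) (hsymm : ∀ D D' : N, B D D' = B D' D)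
    (e m : ℝ) (he : 0 < e) (Θ f : N)
    (hΘΘ : B Θ Θ = -e) (hff : B f f = 0) (hΘf : B Θ f = 1)
    (aL : ℤ) (haL : 1 < aL)
    (Hl : ℝ → N) (hHl : ∀ l : ℝ, Hl l = l • (Θ + m • f) + (1 - l) • f)
    (g : ℝ → ℝ) (hg : ∀ l : ℝ, g l = B (Hl l) (Hl l))
    (onWall : ℝ → ℝ → Prop)
    (honWall : ∀ l q : ℝ, onWall l q ↔
      (-(-(e / 2) * (aL : ℝ) ^ 2) + 1 * g l * q)
          * B (((aL : ℝ) - 1) • Θ) (Hl l)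
        = (-(-(e / 2) * ((aL : ℝ) - 1) ^ 2) + 1 * g l * q)
          * B ((aL : ℝ) • Θ) (Hl l)) :
    ∃ l₀ ∈ Ioo (0 : ℝ) 1, ∃ Q : ℝ → ℝ,
      (∀ l ∈ Ioo (0 : ℝ) l₀, onWall l (Q l) ∧ ∀ q : ℝ, onWall l q → q = Q l) ∧
      Tendsto (fun l => 2 * l * Q l) (nhdsWithin 0 (Ioo (0 : ℝ) l₀))
        (nhds (e / 2 * (aL : ℝ) * ((aL : ℝ) - 1))) := by
  have hfΘ : B f Θ = 1 := by rw [hsymm, hΘf]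
  have ht : ∀ l, B Θ (Hl l) = 1 + (m - e - 1) * l := by
    intro l
    rw [hHl]
    simp only [map_add, map_smul, smul_eq_mul, hΘΘ, hΘf]
    ring
  have hgl : ∀ l, g l = 2 * l * (1 + (m - e / 2 - 1) * l) := by
    intro l
    rw [hg, hHl]
    simp only [map_add, map_smul, smul_eq_mul, LinearMap.add_apply, LinearMap.smul_apply,
      hΘΘ, hΘf, hfΘ, hff]
    ring
  have key : ∀ c d l : ℝ, 0 < l → l < 1 / (2 + |c| + |d|) →
      0 < 1 + c * l ∧ 0 < 1 + d * l := by
    intro c d l h0 h1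
    have hp : 0 < 2 + |c| + |d| := by positivity
    rw [lt_div_iff₀ hp] at h1
    have h2 := mul_le_mul_of_nonneg_right (neg_abs_le c) h0.le
    have h3 := mul_le_mul_of_nonneg_right (neg_abs_le d) h0.le
    have h4 := mul_nonneg (abs_nonneg c) h0.le
    have h5 := mul_nonneg (abs_nonneg d) h0.le
    constructor <;> nlinarith
  have hp : 0 < 2 + |m - e - 1| + |m - e / 2 - 1| := by positivity
  refine ⟨1 / (2 + |m - e - 1| + |m - e / 2 - 1|), ⟨by positivity, ?_⟩,
    fun l => (e / 2 * (aL : ℝ) * ((aL : ℝ) - 1)) / g l, ?_, ?_⟩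
  · rw [div_lt_one hp]
    have := abs_nonneg (m - e - 1)
    have := abs_nonneg (m - e / 2 - 1)
    linarith
  · rintro l ⟨h0, h1⟩
    obtain ⟨k1, k2⟩ := key _ _ l h0 h1
    have hgpos : 0 < g l := by rw [hgl]; positivity
    have hw : ∀ q, onWall l q ↔ q = (e / 2 * (aL : ℝ) * ((aL : ℝ) - 1)) / g l := by
      intro q
      rw [honWall, eq_div_iff hgpos.ne']
      simp only [map_smul, LinearMap.smul_apply, smul_eq_mul, ht]
      constructor
      · intro h
        apply mul_right_cancel₀ k1.ne'
        linear_combination -h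
      · intro h
        linear_combination -(1 + (m - e - 1) * l) * h
    exact ⟨(hw _).2 rfl, fun q hq => (hw q).1 hq⟩
  · have hlim : Tendsto (fun l : ℝ => (e / 2 * (aL : ℝ) * ((aL : ℝ) - 1)) /
        (1 + (m - e / 2 - 1) * l)) (nhds 0) (nhds (e / 2 * (aL : ℝ) * ((aL : ℝ) - 1))) := by
      have hc : ContinuousAt (fun l : ℝ => (e / 2 * (aL : ℝ) * ((aL : ℝ) - 1)) /
        (1 + (m - e / 2 - 1) * l)) 0 := by
        apply ContinuousAt.div
        · fun_prop
        · fun_prop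
        · simp
      simpa [ContinuousAt] using hc
    refine (hlim.mono_left nhdsWithin_le_nhds).congr' ?_
    filter_upwards [self_mem_nhdsWithin] with l hl
    obtain ⟨k1, k2⟩ := key _ _ l hl.1 hl.2
    have := hl.1.ne'
    have := k2.ne'
    rw [hgl, mul_div_assoc', mul_div_mul_left]
    positivity
end

section
/- Let e > 0 and m be real numbers, let a_L > 1 be an integer, and let α > 0 with K := α + m − e > 0 and K ≠ (e/2)a_L(a_L−1). Let ch^a := (1, a_L·Θ, −(e/2)a_L²), ch^b := (1, (a_L−1)·Θ, −(e/2)(a_L−1)²), and for 0 < λ < 1 with λ + (m − e/2 − 1)λ² > 0 let q_vs(λ) := K/(2(λ + (m − e/2 − 1)λ²)) (the volume section). Then there exists λ₀ ∈ (0,1) such that, writing Q(λ) for the unique real number with (λ, Q(λ)) on the potential wall W(ch^a, ch^b) for λ ∈ (0,λ₀), either q_vs(λ) > Q(λ) for all λ ∈ (0,λ₀), or q_vs(λ) < Q(λ) for all λ ∈ (0,λ₀) (according to the sign of K − (e/2)a_L(a_L−1)); in particular the point (λ, q_vs(λ)) never lies on W(ch^a, ch^b) for λ ∈ (0,λ₀).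 -/
open Set Filter

/-- Wall separation for line bundles `O_X(a_LΘ)` on a Picard-rank-two
Weierstraß elliptic surface: if `K = α + m − e > 0` and
`K ≠ (e/2)a_L(a_L−1)`, then for sufficiently small `λ > 0` the volume section
`q_vs(λ) = K/(2(λ + (m − e/2 − 1)λ²))` lies entirely on one side of the
unique potential wall `W(ch(O_X(a_LΘ)), ch(O_X((a_L−1)Θ)))`; in particular
the point `(λ, q_vs(λ))` never lies on the wall. -/
theorem volume_section_avoids_line_bundle_wall
    {N : Type*} [AddCommGroup N] [Module ℝ N]
    (B : N →ₗ[ℝ] N →ₗ[ℝ] ℝ) (hsymm : ∀ D D' : N, B D D' = B D' D)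
    (e m : ℝ) (he : 0 < e) (Θ f : N)
    (hΘΘ : B Θ Θ = -e) (hff : B f f = 0) (hΘf : B Θ f = 1)
    (aL : ℤ) (haL : 1 < aL)
    (α K : ℝ) (hα : 0 < α) (hK : K = α + m - e) (hKpos : 0 < K)
    (hKne : K ≠ e / 2 * (aL : ℝ) * ((aL : ℝ) - 1))
    (Hl : ℝ → N) (hHl : ∀ l : ℝ, Hl l = l • (Θ + m • f) + (1 - l) • f)
    (g : ℝ → ℝ) (hg : ∀ l : ℝ, g l = B (Hl l) (Hl l))
    (onWall : ℝ → ℝ → Prop)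
    (honWall : ∀ l q : ℝ, onWall l q ↔
      (-(-(e / 2) * (aL : ℝ) ^ 2) + 1 * g l * q)
          * B (((aL : ℝ) - 1) • Θ) (Hl l)
        = (-(-(e / 2) * ((aL : ℝ) - 1) ^ 2) + 1 * g l * q)
          * B ((aL : ℝ) • Θ) (Hl l))
    (qvs : ℝ → ℝ)
    (hqvs : ∀ l : ℝ, qvs l = K / (2 * (l + (m - e / 2 - 1) * l ^ 2))) :
    ∃ l₀ ∈ Ioo (0 : ℝ) 1, ∃ Q : ℝ → ℝ,
      (∀ l ∈ Ioo (0 : ℝ) l₀, onWall l (Q l) ∧ ∀ q : ℝ, onWall l q → q = Q l) ∧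
      ((∀ l ∈ Ioo (0 : ℝ) l₀, Q l < qvs l) ∨
        (∀ l ∈ Ioo (0 : ℝ) l₀, qvs l < Q l)) ∧
      (∀ l ∈ Ioo (0 : ℝ) l₀, ¬ onWall l (qvs l)) := by
  have ht : ∀ l, B Θ (Hl l) = 1 + (m - e - 1) * l := by
    intro l
    rw [hHl]
    simp only [map_add, map_smul, smul_eq_mul, hΘΘ, hΘf]
    ring
  have hG : ∀ l, g l = 2 * (l + (m - e / 2 - 1) * l ^ 2) := by
    intro l
    rw [hg, hHl]
    simp only [map_add, map_smul, LinearMap.add_apply, LinearMap.smul_apply, smul_eq_mul,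
      hΘΘ, hΘf, hff, hsymm f Θ]
    ring
  have key : ∀ l q, B Θ (Hl l) ≠ 0 →
      (onWall l q ↔ g l * q = e / 2 * (aL : ℝ) * ((aL : ℝ) - 1)) := by
    intro l q h0
    rw [honWall]
    simp only [map_smul, LinearMap.smul_apply, smul_eq_mul]
    constructor
    · intro h
      apply mul_right_cancel₀ h0
      linear_combination -h
    · intro h
      linear_combination (-B Θ (Hl l)) * h
  have hc : 0 < |m - e / 2 - 1| + |m - e - 1| + 2 := by positivity
  set c := |m - e / 2 - 1| + |m - e - 1| + 2 with hcdef
  have hpos : ∀ l ∈ Ioo (0 : ℝ) (1 / c), 0 < g l ∧ 0 < B Θ (Hl l) := by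
    rintro l ⟨h0, h1⟩
    rw [lt_div_iff₀ hc] at h1
    have a1 := neg_abs_le (m - e / 2 - 1)
    have a2 := neg_abs_le (m - e - 1)
    have b1 := abs_nonneg (m - e / 2 - 1)
    have b2 := abs_nonneg (m - e - 1)
    have p1 : 0 < 1 + (m - e / 2 - 1) * l := by nlinarith
    have p2 : 0 < 1 + (m - e - 1) * l := by nlinarith
    rw [hG, ht]
    refine ⟨?_, p2⟩
    have := mul_pos h0 p1
    nlinarith
  have hq : ∀ l, qvs l = K / g l := by
    intro l
    rw [hqvs, hG]
  refine ⟨1 / c, ⟨by positivity, ?_⟩,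
    fun l => (e / 2 * (aL : ℝ) * ((aL : ℝ) - 1)) / g l, ?_, ?_, ?_⟩
  · rw [div_lt_one hc]
    have b1 := abs_nonneg (m - e / 2 - 1)
    have b2 := abs_nonneg (m - e - 1)
    linarith
  · intro l hl
    obtain ⟨h1, h2⟩ := hpos l hl
    refine ⟨(key l _ h2.ne').2 (mul_div_cancel₀ _ h1.ne'), fun q h => ?_⟩
    rw [eq_div_iff h1.ne', mul_comm]
    exact (key l q h2.ne').1 h
  · rcases lt_or_gt_of_ne hKne with h | h
    · right
      intro l hl
      rw [hq]
      exact div_lt_div_of_pos_right h (hpos l hl).1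
    · left
      intro l hl
      rw [hq]
      exact div_lt_div_of_pos_right h (hpos l hl).1
  · intro l hl h
    obtain ⟨h1, h2⟩ := hpos l hl
    have h3 := (key l _ h2.ne').1 h
    rw [hq, mul_div_cancel₀ _ h1.ne'] at h3
    exact hKne h3
end
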